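/- Let n ≥ 1 and let f : ℝⁿ → ℝ be a smooth convex function whose Hessian D²f(x) is positive definite at every x ∈ ℝⁿ. Then the graph of f is an elliptic paraboloid (i.e. f(x) = ⟨x, A x⟩ + ⟨b, x⟩ + c for some positive definite symmetric n×n matrix A, b ∈ ℝⁿ, c ∈ ℝ) if and only if there exists a constant a > 0 such that V*_x(k) = a · k^{(n+2)/2} for all x ∈ ℝⁿ and all k > 0. -/

import Mathlib

open MeasureTheory Filter
open scoped RealInnerProductSpace Topology

/-- The Hessian matrix of `f : ℝⁿ → ℝ` at a point `x`, with entries the second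
partial derivatives of `f`. -/
noncomputable def hessianMatrix {n : ℕ} (f : EuclideanSpace ℝ (Fin n) → ℝ)
    (x : EuclideanSpace ℝ (Fin n)) : Matrix (Fin n) (Fin n) ℝ :=
  Matrix.of fun i j =>
    iteratedFDeriv ℝ 2 f x ![EuclideanSpace.single i 1, EuclideanSpace.single j 1]

section Bregman

variable {E : Type*} [NormedAddCommGroup E] [InnerProductSpace ℝ E] [CompleteSpace E]

/-- The Bregman divergence of `f`: the height of the graph of `f` at `y` above the tangent
hyperplane at `x`. -/
noncomputable def bregman (f : E → ℝ) (x y : E) : ℝ :=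
  f y - f x - ⟪gradient f x, y - x⟫

theorem bregman_self (f : E → ℝ) (x : E) : bregman f x x = 0 := by simp [bregman]

theorem bregman_nonneg {f : E → ℝ} (hconv : ConvexOn ℝ Set.univ f) (hf : Differentiable ℝ f)
    (x y : E) : 0 ≤ bregman f x y := by
  have hline : HasDerivAt (fun s : ℝ => f (AffineMap.lineMap x y s)) ⟪gradient f x, y - x⟫ 0 := by
    rw [inner_gradient_left]
    have h1 : HasFDerivAt f (fderiv ℝ f x) (AffineMap.lineMap x y (0 : ℝ)) := by
      simpa using (hf x).hasFDerivAt
    exact h1.comp_hasDerivAt (0 : ℝ) AffineMap.hasDerivAt_lineMap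
  have hc : ConvexOn ℝ Set.univ (fun s : ℝ => f (AffineMap.lineMap x y s)) := by
    exact hconv.comp_affineMap (AffineMap.lineMap (k := ℝ) x y)
  have := hc.le_slope_of_hasDerivAt (Set.mem_univ 0) (Set.mem_univ 1) one_pos hline
  simp only [slope_def_field, AffineMap.lineMap_apply_zero, AffineMap.lineMap_apply_one, sub_zero,
    div_one] at this
  simp only [bregman]
  linarith

theorem continuous_bregman {f : E → ℝ} (hf : Continuous f) (x : E) :
    Continuous (bregman f x) := by
  unfold bregman
  fun_prop

/-- Changing the base point of the Bregman divergence adds an affine function. -/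
theorem bregman_change_base (f : E → ℝ) (x x' y : E) :
    bregman f x' y =
      bregman f x y - ⟪gradient f x' - gradient f x, y - x⟫ + bregman f x' x := by
  simp only [bregman, inner_sub_left, inner_sub_right]
  ring

theorem bregman_swap (f : E → ℝ) (x x' : E) :
    bregman f x' x = ⟪gradient f x' - gradient f x, x' - x⟫ - bregman f x x' := by
  simp only [bregman, inner_sub_left, inner_sub_right]
  ring

theorem contDiff_gradient {f : E → ℝ} (hf : ContDiff ℝ 2 f) : ContDiff ℝ 1 (gradient f) := by
  have h : ContDiff ℝ 1 (fderiv ℝ f) := hf.fderiv_right (by norm_num)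
  exact (InnerProductSpace.toDual ℝ E).symm.contDiff.comp h

theorem inner_fderiv_gradient {f : E → ℝ} (hf : ContDiff ℝ 2 f) (x u v : E) :
    ⟪fderiv ℝ (gradient f) x u, v⟫ = fderiv ℝ (fderiv ℝ f) x u v := by
  have h : Differentiable ℝ (fderiv ℝ f) :=
    (hf.fderiv_right (m := 1) (by norm_num)).differentiable (by norm_num)
  have h' : HasFDerivAt (gradient f) _ x :=
    (InnerProductSpace.toDual ℝ E).symm.toContinuousLinearEquiv.toContinuousLinearMap.hasFDerivAt.comp x
      (h x).hasFDerivAt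
  rw [h'.fderiv]
  exact InnerProductSpace.toDual_symm_apply

theorem inner_fderiv_gradient_comm {f : E → ℝ} (hf : ContDiff ℝ 2 f) (x u v : E) :
    ⟪fderiv ℝ (gradient f) x u, v⟫ = ⟪u, fderiv ℝ (gradient f) x v⟫ := by
  rw [real_inner_comm _ u, inner_fderiv_gradient hf, inner_fderiv_gradient hf]
  exact (hf.contDiffAt.isSymmSndFDerivAt (by simp)).eq u v

/-- Second order Taylor expansion of the Bregman divergence. -/
theorem bregman_sub_isLittleO {f : E → ℝ} (hf : ContDiff ℝ 2 f) (x : E) :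
    (fun h => bregman f x (x + h) - 1 / 2 * ⟪fderiv ℝ (gradient f) x h, h⟫) =o[𝓝 0]
      fun h => ‖h‖ ^ 2 := by
  set G := fderiv ℝ (gradient f) x with hG
  have hd : HasFDerivAt (gradient f) G x :=
    ((contDiff_gradient hf).differentiable (by norm_num) x).hasFDerivAt
  have ho := hasFDerivAt_iff_isLittleO_nhds_zero.1 hd
  rw [Asymptotics.isLittleO_iff]
  intro ε hε
  obtain ⟨r, hr, hball⟩ := Metric.eventually_nhds_iff_ball.1 (ho.def hε)
  refine Metric.eventually_nhds_iff_ball.2 ⟨r, hr, fun h hh => ?_⟩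
  have hder : ∀ z ∈ Metric.closedBall (0 : E) ‖h‖, HasFDerivWithinAt
      (fun h => bregman f x (x + h) - 1 / 2 * ⟪G h, h⟫)
      (innerSL ℝ (gradient f (x + z) - gradient f x - G z))
      (Metric.closedBall (0 : E) ‖h‖) z := by
    intro z _
    apply HasFDerivAt.hasFDerivWithinAt
    have h1 : HasFDerivAt (fun z => f (x + z)) (fderiv ℝ f (x + z)) z :=
      (hasFDerivAt_comp_add_left x).2 (hf.differentiable (by norm_num) (x + z)).hasFDerivAt
    have h2 : HasFDerivAt (fun z => ⟪gradient f x, x + z - x⟫) (innerSL ℝ (gradient f x)) z := by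
      simpa using (innerSL ℝ (gradient f x)).hasFDerivAt
    have h3 := (G.hasFDerivAt (x := z)).inner ℝ (hasFDerivAt_id z)
    refine (((h1.sub_const (f x)).sub h2).sub (h3.const_mul (1 / 2))).congr_fderiv ?_
    ext w
    have : ⟪G w, z⟫ = ⟪G z, w⟫ := by
      rw [hG, inner_fderiv_gradient_comm hf, real_inner_comm]
    simp [this, inner_gradient_left]
    ring
  have hbound : ∀ z ∈ Metric.closedBall (0 : E) ‖h‖,
      ‖innerSL ℝ (gradient f (x + z) - gradient f x - G z)‖ ≤ ε * ‖h‖ := by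
    intro z hz
    rw [innerSL_apply_norm]
    rw [mem_closedBall_zero_iff] at hz
    rw [mem_ball_zero_iff] at hh
    exact (hball z (by rw [mem_ball_zero_iff]; linarith)).trans (by gcongr)
  have := (convex_closedBall (0 : E) ‖h‖).norm_image_sub_le_of_norm_hasFDerivWithin_le hder hbound
    (x := 0) (y := h) (by simp) (by simp)
  simp only [add_zero, bregman_self, map_zero, inner_zero_left, mul_zero, sub_zero] at this
  rw [norm_pow, norm_norm, sq, ← mul_assoc]
  exact this

/-- Along a curve with velocity `w`, the Bregman divergence is quadratic to leading order. -/
theorem tendsto_bregman_curve {f : E → ℝ} (hf : ContDiff ℝ 2 f) {x w : E} {c : ℝ → E}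
    (hc : HasDerivAt c w 0) (hc0 : c 0 = x) :
    Tendsto (fun s : ℝ => bregman f x (c s) / s ^ 2) (𝓝[≠] 0)
      (𝓝 (1 / 2 * ⟪fderiv ℝ (gradient f) x w, w⟫)) := by
  set G := fderiv ℝ (gradient f) x
  have hq : Tendsto (fun s : ℝ => s⁻¹ • (c s - x)) (𝓝[≠] 0) (𝓝 w) := by
    simpa [slope_fun_def, hc0] using hc.tendsto_slope
  have h0 : Tendsto (fun s => c s - x) (𝓝[≠] 0) (𝓝 0) := by
    have : Tendsto c (𝓝[≠] 0) (𝓝 x) := hc0 ▸ hc.continuousAt.tendsto.mono_left nhdsWithin_le_nhds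
    simpa using this.sub_const x
  have hO : (fun s => ‖c s - x‖ ^ 2) =O[𝓝[≠] 0] fun s : ℝ => s ^ 2 := by
    have h : (fun s => c s - x) =O[𝓝[≠] 0] fun s : ℝ => s := by
      have := hc.hasFDerivAt.isBigO_sub.mono (nhdsWithin_le_nhds (s := {0}ᶜ))
      simpa [hc0] using this
    simpa using h.norm_left.pow 2
  have ho := ((bregman_sub_isLittleO hf x).comp_tendsto h0).trans_isBigO hO
  have h1 := ho.tendsto_div_nhds_zero
  have h2 : Tendsto (fun s : ℝ => 1 / 2 * ⟪G (s⁻¹ • (c s - x)), s⁻¹ • (c s - x)⟫) (𝓝[≠] 0)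
      (𝓝 (1 / 2 * ⟪G w, w⟫)) :=
    (((G.continuous.tendsto w).comp hq).inner hq).const_mul _
  have h3 := h1.add h2
  rw [zero_add] at h3
  refine h3.congr' ?_
  filter_upwards [self_mem_nhdsWithin] with s hs
  have hs : s ≠ 0 := hs
  simp only [Function.comp, map_smul, inner_smul_left, inner_smul_right, add_sub_cancel,
    RCLike.conj_to_real]
  field_simp
  ring

/-- Where the Hessian is invertible, the gradient attains `gradient f x + s • v` along a
curve `c`, and the Bregman divergence `bregman f (c s) x` has leading term given by the inverse
Hessian. -/
theorem exists_curve_gradient [FiniteDimensional ℝ E] {f : E → ℝ} (hf : ContDiff ℝ 2 f) {x : E}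
    (hpos : ∀ z ≠ 0, 0 < ⟪fderiv ℝ (gradient f) x z, z⟫) {v w : E}
    (hw : fderiv ℝ (gradient f) x w = v) :
    ∃ c : ℝ → E, (∀ᶠ s in 𝓝 (0 : ℝ), gradient f (c s) = gradient f x + s • v) ∧
      Tendsto (fun s : ℝ => bregman f (c s) x / s ^ 2) (𝓝[≠] 0) (𝓝 (1 / 2 * ⟪v, w⟫)) := by
  set G := fderiv ℝ (gradient f) x with hG
  have hinj : Function.Injective G := by
    rw [injective_iff_map_eq_zero]
    intro z hz
    by_contra hne
    simpa [hz] using hpos z hne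
  let e : E ≃L[ℝ] E := (LinearEquiv.ofInjectiveEndo (G : E →ₗ[ℝ] E) hinj).toContinuousLinearEquiv
  have he : (e : E →L[ℝ] E) = G := by ext z; rfl
  have hst : HasStrictFDerivAt (gradient f) (e : E →L[ℝ] E) x := by
    rw [he]
    exact (contDiff_gradient hf).contDiffAt.hasStrictFDerivAt (by norm_num)
  have hline : HasDerivAt (fun s : ℝ => gradient f x + s • v) v 0 := by
    simpa using ((hasDerivAt_id (0 : ℝ)).smul_const v).const_add (gradient f x)
  have hline0 : Tendsto (fun s : ℝ => gradient f x + s • v) (𝓝 0) (𝓝 (gradient f x)) := by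
    simpa using hline.continuousAt.tendsto
  let c : ℝ → E := fun s => hst.localInverse _ _ _ (gradient f x + s • v)
  have hc0 : c 0 = x := by simp [c]
  have hc : HasDerivAt c w 0 := by
    have h1 : HasFDerivAt (hst.localInverse _ _ _) (e.symm : E →L[ℝ] E)
        (gradient f x + (0 : ℝ) • v) := by
      simpa using hst.to_localInverse.hasFDerivAt
    have h2 := h1.comp_hasDerivAt (0 : ℝ) hline
    have h3 : e.symm v = w := by
      rw [e.symm_apply_eq]
      exact hw.symm
    rw [ContinuousLinearEquiv.coe_coe, h3] at h2
    exact h2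
  have hev : ∀ᶠ s in 𝓝 (0 : ℝ), gradient f (c s) = gradient f x + s • v :=
    hline0.eventually hst.eventually_right_inverse
  refine ⟨c, hev, ?_⟩
  have hq : Tendsto (fun s : ℝ => s⁻¹ • (c s - x)) (𝓝[≠] 0) (𝓝 w) := by
    simpa [slope_fun_def, hc0] using hc.tendsto_slope
  have h1 := ((tendsto_const_nhds (x := v)).inner hq).sub (tendsto_bregman_curve hf hc hc0)
  rw [← hG, hw] at h1
  rw [show 1 / 2 * ⟪v, w⟫ = ⟪v, w⟫ - 1 / 2 * ⟪v, w⟫ by ring]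
  refine h1.congr' ?_
  filter_upwards [self_mem_nhdsWithin, hev.filter_mono nhdsWithin_le_nhds] with s hs hs'
  have hs : s ≠ 0 := hs
  rw [bregman_swap f x (c s), hs', add_sub_cancel_left, inner_smul_left, inner_smul_right,
    RCLike.conj_to_real]
  field_simp

end Bregman

section Laplace

open Set Real

theorem lintegral_ofReal_sub_mul_exp {r t : ℝ} (hr : 0 ≤ r) (ht : 0 < t) :
    ∫⁻ k in Ioi (0 : ℝ), ENNReal.ofReal (k - r) * ENNReal.ofReal (t ^ 2 * exp (-(t * k))) =
      ENNReal.ofReal (exp (-(t * r))) := by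
  have hrestrict : ∫⁻ k in Ioi (0 : ℝ),
      ENNReal.ofReal (k - r) * ENNReal.ofReal (t ^ 2 * exp (-(t * k))) =
      ∫⁻ k in Ioi r, ENNReal.ofReal ((k - r) * (t ^ 2 * exp (-(t * k)))) := by
    rw [← lintegral_indicator measurableSet_Ioi, ← lintegral_indicator measurableSet_Ioi]
    refine lintegral_congr fun k => ?_
    by_cases hk : r < k
    · rw [indicator_of_mem (mem_Ioi.2 (hr.trans_lt hk)), indicator_of_mem (mem_Ioi.2 hk),
        ← ENNReal.ofReal_mul (by linarith)]
    · have : ENNReal.ofReal (k - r) = 0 := ENNReal.ofReal_of_nonpos (by linarith)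
      simp [indicator, hk, this]
  have hderiv : ∀ k ∈ Ici r, HasDerivAt (fun k => -((t * (k - r) + 1) * exp (-(t * k))))
      ((k - r) * (t ^ 2 * exp (-(t * k)))) k := by
    intro k _
    have h1 : HasDerivAt (fun k => t * (k - r) + 1) t k := by
      simpa using (((hasDerivAt_id k).sub_const r).const_mul t).add_const 1
    have h2 : HasDerivAt (fun k => exp (-(t * k))) (exp (-(t * k)) * -t) k := by
      simpa using (((hasDerivAt_id k).const_mul t).neg).exp
    refine (h1.mul h2).neg.congr_deriv ?_
    ring
  have hpos : ∀ k ∈ Ioi r, 0 ≤ (k - r) * (t ^ 2 * exp (-(t * k))) := by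
    intro k hk
    have : 0 ≤ k - r := sub_nonneg.2 (le_of_lt hk)
    positivity
  have hlim : Tendsto (fun k => -((t * (k - r) + 1) * exp (-(t * k)))) atTop (𝓝 0) := by
    have h0 : Tendsto (fun k : ℝ => t * k) atTop atTop := tendsto_id.const_mul_atTop ht
    have h1 : Tendsto (fun k : ℝ => t * k * exp (-(t * k))) atTop (𝓝 0) := by
      simpa [Function.comp_def] using (tendsto_pow_mul_exp_neg_atTop_nhds_zero 1).comp h0
    have h2 : Tendsto (fun k : ℝ => exp (-(t * k))) atTop (𝓝 0) :=
      tendsto_exp_neg_atTop_nhds_zero.comp h0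
    have h3 := (h1.add (h2.const_mul (1 - t * r))).neg
    simp only [mul_zero, add_zero, neg_zero] at h3
    refine h3.congr fun k => ?_
    ring
  rw [hrestrict, ← ofReal_integral_eq_lintegral_ofReal
    (integrableOn_Ioi_deriv_of_nonneg' hderiv hpos hlim)
    ((ae_restrict_iff' measurableSet_Ioi).2 (ae_of_all _ hpos)),
    integral_Ioi_of_hasDerivAt_of_nonneg' hderiv hpos hlim]
  simp

variable {α : Type*} [MeasurableSpace α] {μ : Measure α}

/-- If the integrals of the truncations `(k - D)⁺` are a power of `k`, so is the Laplace transform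
of `D`. -/
theorem lintegral_exp_neg_of_truncation [SFinite μ] {D : α → ℝ} (hD : Measurable D)
    (hD0 : ∀ y, 0 ≤ D y) {a m : ℝ} (ha : 0 < a) (hm : 0 < m)
    (h : ∀ k : ℝ, 0 < k → ∫ y in {y | D y < k}, (k - D y) ∂μ = a * k ^ m) {t : ℝ} (ht : 0 < t) :
    ∫⁻ y, ENNReal.ofReal (exp (-(t * D y))) ∂μ =
      ENNReal.ofReal (a * Gamma (m + 1) * t ^ (1 - m)) := by
  have htrunc : ∀ k : ℝ, 0 < k →
      ∫⁻ y, ENNReal.ofReal (k - D y) ∂μ = ENNReal.ofReal (a * k ^ m) := by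
    intro k hk
    have hS : MeasurableSet {y | D y < k} := measurableSet_lt hD measurable_const
    have hint : IntegrableOn (fun y => k - D y) {y | D y < k} μ := by
      by_contra hni
      have h1 := h k hk
      rw [integral_undef hni] at h1
      have : 0 < a * k ^ m := by positivity
      linarith
    rw [← h k hk, ofReal_integral_eq_lintegral_ofReal hint
      ((ae_restrict_iff' hS).2 (ae_of_all _ fun y hy => sub_nonneg.2 (le_of_lt hy))),
      ← lintegral_indicator hS]
    refine lintegral_congr fun y => ?_
    by_cases hy : D y < k
    · rw [indicator_of_mem (by exact hy)]
    · rw [indicator_of_notMem (by exact hy), ENNReal.ofReal_of_nonpos (by linarith)]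
  have hint : IntegrableOn (fun k : ℝ => k ^ m * exp (-(t * k))) (Ioi 0) := by
    have := integrableOn_rpow_mul_exp_neg_mul_rpow (p := 1) (s := m) (by linarith) one_pos ht
    simpa using this
  calc ∫⁻ y, ENNReal.ofReal (exp (-(t * D y))) ∂μ
      = ∫⁻ y, ∫⁻ k in Ioi (0 : ℝ),
          ENNReal.ofReal (k - D y) * ENNReal.ofReal (t ^ 2 * exp (-(t * k))) ∂volume ∂μ :=
        lintegral_congr fun y => (lintegral_ofReal_sub_mul_exp (hD0 y) ht).symm
    _ = ∫⁻ k in Ioi (0 : ℝ), ∫⁻ y,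
          ENNReal.ofReal (k - D y) * ENNReal.ofReal (t ^ 2 * exp (-(t * k))) ∂μ ∂volume := by
        refine lintegral_lintegral_swap (Measurable.aemeasurable ?_)
        unfold Function.uncurry
        fun_prop
    _ = ∫⁻ k in Ioi (0 : ℝ), ENNReal.ofReal (a * t ^ 2 * (k ^ m * exp (-(t * k)))) := by
        refine setLIntegral_congr_fun measurableSet_Ioi fun k hk => ?_
        have hk : 0 < k := hk
        rw [lintegral_mul_const _ (by fun_prop), htrunc k hk,
          ← ENNReal.ofReal_mul (by positivity)]
        congr 1
        ring
    _ = ENNReal.ofReal (∫ k in Ioi (0 : ℝ), a * t ^ 2 * (k ^ m * exp (-(t * k)))) := by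
        refine (ofReal_integral_eq_lintegral_ofReal (hint.const_mul _)
          ((ae_restrict_iff' measurableSet_Ioi).2 (ae_of_all _ fun k hk => ?_))).symm
        have hk : 0 < k := hk
        simp only [Pi.zero_apply]
        positivity
    _ = ENNReal.ofReal (a * Gamma (m + 1) * t ^ (1 - m)) := by
        have hG := integral_rpow_mul_exp_neg_mul_Ioi (a := m + 1) (by linarith) ht
        rw [add_sub_cancel_right] at hG
        rw [integral_const_mul, hG]
        congr 1
        rw [one_div, inv_rpow ht.le, ← rpow_neg ht.le, ← rpow_natCast t 2,
          show (1 - m) = ((2 : ℕ) : ℝ) + -(m + 1) by push_cast; ring, rpow_add ht]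
        ring

/-- The first moment of `D` under the weight `exp (-D)`, bounded below in terms of the Laplace
transform of `D`. -/
theorem le_integral_mul_exp_neg {D : α → ℝ} (hD : Measurable D) (hD0 : ∀ y, 0 ≤ D y) {C p : ℝ}
    (hint : ∀ t : ℝ, 0 < t → Integrable (fun y => exp (-(t * D y))) μ)
    (h : ∀ t : ℝ, 0 < t → ∫ y, exp (-(t * D y)) ∂μ = C * t ^ (-p)) :
    Integrable (fun y => D y * exp (-D y)) μ ∧ p * C ≤ ∫ y, D y * exp (-D y) ∂μ := by
  have hI : Integrable (fun y => D y * exp (-D y)) μ := by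
    refine ((hint (1 / 2) (by norm_num)).const_mul 2).mono' (by fun_prop) (ae_of_all _ fun y => ?_)
    rw [norm_of_nonneg (mul_nonneg (hD0 y) (exp_pos _).le)]
    have h1 : D y / 2 ≤ exp (D y / 2) := by linarith [add_one_le_exp (D y / 2)]
    have h2 : exp (-D y) = exp (-(1 / 2 * D y)) * exp (-(D y / 2)) := by
      rw [← exp_add]; ring_nf
    have h3 : exp (D y / 2) * exp (-(D y / 2)) = 1 := by rw [← exp_add]; simp
    rw [h2]
    have h4 := exp_pos (-(D y / 2))
    have h5 := exp_pos (-(1 / 2 * D y))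
    have h6 : D y * exp (-(D y / 2)) ≤ 2 := by nlinarith
    nlinarith
  refine ⟨hI, ?_⟩
  have hd : HasDerivAt (fun t : ℝ => -(C * t ^ (-p))) (p * C) 1 := by
    have := ((Real.hasDerivAt_rpow_const (x := 1) (p := -p) (Or.inl one_ne_zero)).const_mul C).neg
    refine this.congr_deriv ?_
    simp
    ring
  have hs : Tendsto (slope (fun t : ℝ => -(C * t ^ (-p))) 1) (𝓝[>] 1) (𝓝 (p * C)) :=
    hd.tendsto_slope.mono_left (nhdsWithin_mono _ fun t ht => ne_of_gt ht)
  refine le_of_tendsto hs ?_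
  filter_upwards [self_mem_nhdsWithin] with t ht
  have ht : 1 < t := ht
  have ht0 : 0 < t - 1 := by linarith
  rw [slope_def_field, div_le_iff₀ ht0, ← integral_mul_const, ← h t (by linarith),
    ← h 1 one_pos, sub_neg_eq_add, neg_add_eq_sub, ← integral_sub (hint 1 one_pos)
      (hint t (by linarith))]
  refine integral_mono ((hint 1 one_pos).sub (hint t (by linarith))) (hI.mul_const _) fun y => ?_
  have h1 : exp (-(t * D y)) = exp (-D y) * exp (-((t - 1) * D y)) := by
    rw [← exp_add]; ring_nf
  have h2 := add_one_le_exp (-((t - 1) * D y))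
  have h3 := exp_pos (-D y)
  simp only [one_mul]
  rw [h1]
  nlinarith

end Laplace

section Rigidity

open Real

variable {E : Type*} [NormedAddCommGroup E] [InnerProductSpace ℝ E] [FiniteDimensional ℝ E]
  [MeasurableSpace E] [BorelSpace E]

theorem lintegral_comp_add_smul (F : E → ENNReal) (hF : Measurable F) (x : E) {s : ℝ}
    (hs : 0 < s) :
    ∫⁻ z, F (x + s • z) = ENNReal.ofReal ((s ^ Module.finrank ℝ E)⁻¹) * ∫⁻ y, F y := by
  have h1 : ∫⁻ z, F (x + s • z) = ∫⁻ y, F (x + y) ∂(Measure.map (s • ·) volume) :=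
    (lintegral_map (f := fun y => F (x + y)) (by fun_prop) (by fun_prop)).symm
  rw [h1, Measure.map_addHaar_smul volume hs.ne', lintegral_smul_measure,
    lintegral_add_left_eq_self, abs_of_pos (by positivity), smul_eq_mul]

/-- If the Laplace transform of the Bregman divergence scales like `t ^ (-d / 2)`, it dominates
the Gaussian integral given by its second order part. -/
theorem lintegral_exp_neg_half_hessian_le {f : E → ℝ} (hf : ContDiff ℝ 2 f) {x : E} {C : ℝ}
    (hL : ∀ t : ℝ, 0 < t → ∫⁻ y, ENNReal.ofReal (exp (-(t * bregman f x y))) =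
      ENNReal.ofReal (C * t ^ (-((Module.finrank ℝ E : ℝ) / 2)))) :
    ∫⁻ z, ENNReal.ofReal (exp (-(1 / 2 * ⟪fderiv ℝ (gradient f) x z, z⟫))) ≤
      ENNReal.ofReal C := by
  set d := Module.finrank ℝ E with hd
  have hcont := continuous_bregman hf.continuous x
  let s : ℕ → ℝ := fun j => 1 / ((j : ℝ) + 1)
  have hspos : ∀ j, 0 < s j := fun j => by positivity
  have hs : Tendsto s atTop (𝓝[≠] 0) :=
    tendsto_nhdsWithin_iff.2 ⟨tendsto_one_div_add_atTop_nhds_zero_nat,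
      Eventually.of_forall fun j => (hspos j).ne'⟩
  let F : ℕ → E → ENNReal := fun j z =>
    ENNReal.ofReal (exp (-((s j ^ 2)⁻¹ * bregman f x (x + s j • z))))
  have hFint : ∀ j, ∫⁻ z, F j z = ENNReal.ofReal C := by
    intro j
    have hsj := hspos j
    have h1 := lintegral_comp_add_smul
      (fun y => ENNReal.ofReal (exp (-((s j ^ 2)⁻¹ * bregman f x y)))) (by fun_prop) x hsj
    rw [hL _ (by positivity), ← ENNReal.ofReal_mul (by positivity)] at h1
    rw [h1]
    congr 1
    rw [← rpow_natCast (s j) 2, ← rpow_neg hsj.le, ← rpow_mul hsj.le, ← rpow_natCast,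
      show -((2 : ℕ) : ℝ) * -((d : ℝ) / 2) = d by push_cast; ring, rpow_natCast]
    field_simp
  have hlim : ∀ z, Tendsto (fun j => F j z) atTop
      (𝓝 (ENNReal.ofReal (exp (-(1 / 2 * ⟪fderiv ℝ (gradient f) x z, z⟫))))) := by
    intro z
    have hline : HasDerivAt (fun s : ℝ => x + s • z) z 0 := by
      simpa using ((hasDerivAt_id (0 : ℝ)).smul_const z).const_add x
    have h1 := (tendsto_bregman_curve (x := x) hf hline (by simp)).comp hs
    refine ENNReal.tendsto_ofReal ((continuous_exp.tendsto _).comp ?_)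
    refine h1.neg.congr fun j => ?_
    simp only [Function.comp]
    ring
  calc ∫⁻ z, ENNReal.ofReal (exp (-(1 / 2 * ⟪fderiv ℝ (gradient f) x z, z⟫)))
      = ∫⁻ z, liminf (fun j => F j z) atTop := lintegral_congr fun z => (hlim z).liminf_eq.symm
    _ ≤ liminf (fun j => ∫⁻ z, F j z) atTop := lintegral_liminf_le fun j => by fun_prop
    _ = ENNReal.ofReal C := by simp [hFint]

theorem one_add_sq_div_two_le_cosh (u : ℝ) : 1 + u ^ 2 / 2 ≤ cosh u := by
  have h : (u / 2) ^ 2 ≤ sinh (u / 2) ^ 2 := by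
    rcases le_total 0 u with hu | hu
    · have := self_le_sinh_iff.2 (show 0 ≤ u / 2 by linarith)
      gcongr
    · have := sinh_le_self_iff.2 (show u / 2 ≤ 0 by linarith)
      nlinarith
  have h1 := cosh_two_mul (u / 2)
  rw [mul_div_cancel₀ u two_ne_zero, cosh_sq] at h1
  linarith

/-- If the partition function of the Bregman divergence does not depend on the base point, the
covariance of the associated Gibbs measure is bounded by the inverse Hessian. -/
theorem integral_inner_sq_mul_exp_neg_le {f : E → ℝ} (hf : ContDiff ℝ 2 f) {C : ℝ}
    (hint : ∀ x, Integrable fun y => exp (-bregman f x y))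
    (hL : ∀ x, ∫ y, exp (-bregman f x y) = C) {x : E}
    (hpos : ∀ z ≠ 0, 0 < ⟪fderiv ℝ (gradient f) x z, z⟫) {v w : E}
    (hw : fderiv ℝ (gradient f) x w = v) :
    (Integrable fun y => ⟪v, y - x⟫ ^ 2 * exp (-bregman f x y)) ∧
      ∫ y, ⟪v, y - x⟫ ^ 2 * exp (-bregman f x y) ≤ C * ⟪v, w⟫ := by
  have hcont := continuous_bregman hf.continuous x
  obtain ⟨c, hc, hlim⟩ := exists_curve_gradient hf hpos hw
  obtain ⟨c', hc', hlim'⟩ := exists_curve_gradient hf hpos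
    (show fderiv ℝ (gradient f) x (-w) = -v by rw [map_neg, hw])
  have key : ∀ {b : E} {q : E}, gradient f b = gradient f x + q →
      (Integrable fun y => exp (⟪q, y - x⟫ - bregman f x y)) ∧
        ∫ y, exp (⟪q, y - x⟫ - bregman f x y) = C * exp (bregman f b x) := by
    intro b q hb
    have : (fun y => exp (⟪q, y - x⟫ - bregman f x y)) =
        fun y => exp (-bregman f b y) * exp (bregman f b x) := by
      ext y
      rw [← exp_add, bregman_change_base f x b y, hb, add_sub_cancel_left]
      ring_nf
    rw [this, integral_mul_const, hL]
    exact ⟨(hint b).mul_const _, rfl⟩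
  have hpt : ∀ (s : ℝ) (y : E), s ^ 2 * (⟪v, y - x⟫ ^ 2 * exp (-bregman f x y)) ≤
      exp (⟪s • v, y - x⟫ - bregman f x y) + exp (⟪s • -v, y - x⟫ - bregman f x y) -
        2 * exp (-bregman f x y) := by
    intro s y
    have h1 := one_add_sq_div_two_le_cosh (s * ⟪v, y - x⟫)
    rw [cosh_eq] at h1
    have h2 := exp_pos (-bregman f x y)
    simp only [smul_neg, inner_neg_left, inner_smul_left, RCLike.conj_to_real]
    rw [sub_eq_add_neg (s * ⟪v, y - x⟫), sub_eq_add_neg (-(s * ⟪v, y - x⟫)), exp_add, exp_add]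
    nlinarith
  have hev : ∀ᶠ s in 𝓝[≠] (0 : ℝ),
      (Integrable fun y => ⟪v, y - x⟫ ^ 2 * exp (-bregman f x y)) ∧
      ∫ y, ⟪v, y - x⟫ ^ 2 * exp (-bregman f x y) ≤
        C * ((exp (bregman f (c s) x) - 1) / s ^ 2 + (exp (bregman f (c' s) x) - 1) / s ^ 2) := by
    filter_upwards [self_mem_nhdsWithin, hc.filter_mono nhdsWithin_le_nhds,
      hc'.filter_mono nhdsWithin_le_nhds] with s hs hcs hcs'
    have hs : s ≠ 0 := hs
    have hs2 : 0 < s ^ 2 := by positivity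
    obtain ⟨i1, e1⟩ := key hcs
    obtain ⟨i2, e2⟩ := key hcs'
    have i12 : Integrable fun y =>
        exp (⟪s • v, y - x⟫ - bregman f x y) + exp (⟪s • -v, y - x⟫ - bregman f x y) := i1.add i2
    have i3 := i12.sub ((hint x).const_mul 2)
    have hI : Integrable fun y => s ^ 2 * (⟪v, y - x⟫ ^ 2 * exp (-bregman f x y)) := by
      refine i3.mono' (by fun_prop) (ae_of_all _ fun y => ?_)
      rw [norm_of_nonneg (by positivity)]
      exact hpt s y
    refine ⟨(integrable_const_mul_iff hs2.ne'.isUnit _).1 hI, ?_⟩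
    have h1 := integral_mono hI i3 (hpt s)
    rw [integral_const_mul] at h1
    have h2 : ∫ y, (exp (⟪s • v, y - x⟫ - bregman f x y) + exp (⟪s • -v, y - x⟫ - bregman f x y) -
        2 * exp (-bregman f x y)) = C * exp (bregman f (c s) x) + C * exp (bregman f (c' s) x) -
          2 * C := by
      rw [integral_sub i12 ((hint x).const_mul 2), integral_add i1 i2, e1, e2,
        integral_const_mul, hL]
    have h3 := h1.trans_eq h2
    rw [← le_div_iff₀' hs2] at h3
    refine h3.trans_eq ?_
    field_simp
    ring
  refine ⟨hev.exists.choose_spec.1, ge_of_tendsto ?_ (hev.mono fun s hs => hs.2)⟩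
  have hexp : ∀ {g : ℝ → ℝ} {l : ℝ}, Tendsto (fun s => g s / s ^ 2) (𝓝[≠] 0) (𝓝 l) →
      Tendsto (fun s => (exp (g s) - 1) / s ^ 2) (𝓝[≠] 0) (𝓝 l) := by
    intro g l hg
    have hs2 : Tendsto (fun s : ℝ => s ^ 2) (𝓝[≠] 0) (𝓝 0) := by
      have : Tendsto (fun s : ℝ => s ^ 2) (𝓝 0) (𝓝 (0 ^ 2)) := (continuous_pow 2).tendsto 0
      simpa using this.mono_left nhdsWithin_le_nhds
    have hg0 : Tendsto g (𝓝[≠] 0) (𝓝 0) := by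
      have := hg.mul hs2
      rw [mul_zero] at this
      refine this.congr' ?_
      filter_upwards [self_mem_nhdsWithin] with s hs
      have hs : s ≠ 0 := hs
      field_simp
    have hO : (fun s => g s) =O[𝓝[≠] 0] fun s : ℝ => s ^ 2 := by
      refine Asymptotics.isBigO_of_div_tendsto_nhds ?_ l hg
      filter_upwards [self_mem_nhdsWithin] with s hs h0
      have hs : s ≠ 0 := hs
      exact absurd h0 (by positivity)
    have hd : HasDerivAt exp 1 0 := by simpa using Real.hasDerivAt_exp 0
    have ho := hasDerivAt_iff_isLittleO_nhds_zero.1 hd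
    have h2 := ((ho.comp_tendsto hg0).trans_isBigO hO).tendsto_div_nhds_zero
    have h3 := h2.add hg
    rw [zero_add] at h3
    refine h3.congr fun s => ?_
    simp only [Function.comp, zero_add, exp_zero, smul_eq_mul, mul_one]
    ring
  have h := ((hexp hlim).add (hexp hlim')).const_mul C
  convert h using 2
  rw [inner_neg_neg]
  ring

/-- If the Laplace transform of the Bregman divergence is `C * t ^ (-d / 2)` at every base point,
then the Bregman divergence is a quadratic form. -/
theorem bregman_eq_half_hessian {f : E → ℝ} (hf : ContDiff ℝ 2 f)
    (hconv : ConvexOn ℝ Set.univ f)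
    (hpos : ∀ x, ∀ z ≠ 0, 0 < ⟪fderiv ℝ (gradient f) x z, z⟫) {C : ℝ} (hC : 0 ≤ C)
    (hL : ∀ x, ∀ t : ℝ, 0 < t → ∫⁻ y, ENNReal.ofReal (exp (-(t * bregman f x y))) =
      ENNReal.ofReal (C * t ^ (-((Module.finrank ℝ E : ℝ) / 2)))) (x y : E) :
    bregman f x y = 1 / 2 * ⟪fderiv ℝ (gradient f) x (y - x), y - x⟫ := by
  set G := fderiv ℝ (gradient f) x with hG
  set d := Module.finrank ℝ E with hd
  have hcont : ∀ x, Continuous (bregman f x) := continuous_bregman hf.continuous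
  have hint : ∀ x, ∀ t : ℝ, 0 < t → Integrable fun y => exp (-(t * bregman f x y)) := by
    intro x t ht
    have := hcont x
    refine (lintegral_ofReal_ne_top_iff_integrable (by fun_prop)
      (ae_of_all _ fun y => (exp_pos _).le)).1 ?_
    rw [hL x t ht]
    exact ENNReal.ofReal_ne_top
  have hval : ∀ x, ∀ t : ℝ, 0 < t → ∫ y, exp (-(t * bregman f x y)) = C * t ^ (-((d : ℝ) / 2)) := by
    intro x t ht
    rw [integral_eq_lintegral_of_nonneg_ae (ae_of_all _ fun y => (exp_pos _).le)
      (hint x t ht).aestronglyMeasurable, hL x t ht, ENNReal.toReal_ofReal (by positivity)]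
  have hint1 : ∀ x, Integrable fun y => exp (-bregman f x y) := fun x => by
    simpa using hint x 1 one_pos
  have hval1 : ∀ x, ∫ y, exp (-bregman f x y) = C := fun x => by
    simpa using hval x 1 one_pos
  obtain ⟨iD, hD⟩ := le_integral_mul_exp_neg (hcont x).measurable
    (bregman_nonneg hconv (hf.differentiable (by norm_num)) x) (hint x) (hval x)
  -- second moments in an orthonormal eigenbasis of the Hessian
  have hsymm : (G : E →ₗ[ℝ] E).IsSymmetric := fun u v => inner_fderiv_gradient_comm hf x u v
  let e := hsymm.eigenvectorBasis hd.symm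
  let l := hsymm.eigenvalues hd.symm
  have hGe : ∀ i, G (e i) = l i • e i := fun i => hsymm.apply_eigenvectorBasis hd.symm i
  have hl : ∀ i, 0 < l i := by
    intro i
    have h1 := hpos x (e i) (e.orthonormal.ne_zero i)
    rwa [← hG, hGe, inner_smul_left, real_inner_self_eq_norm_sq, e.orthonormal.1 i, one_pow,
      mul_one] at h1
  have hQ : ∀ z, ⟪G z, z⟫ = ∑ i, l i * ⟪e i, z⟫ ^ 2 := by
    intro z
    rw [← e.sum_inner_mul_inner]
    refine Finset.sum_congr rfl fun i _ => ?_
    rw [hsymm.apply_clm z (e i), hGe, inner_smul_right, real_inner_comm (e i) z]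
    ring
  have hmom := fun i => integral_inner_sq_mul_exp_neg_le hf hint1 hval1 (hpos x)
    (v := e i) (w := (l i)⁻¹ • e i)
    (by rw [map_smul, ← hG, hGe, smul_smul, inv_mul_cancel₀ (hl i).ne', one_smul])
  have hQe : (fun y => 1 / 2 * ⟪G (y - x), y - x⟫ * exp (-bregman f x y)) =
      fun y => ∑ i, l i / 2 * (⟪e i, y - x⟫ ^ 2 * exp (-bregman f x y)) := by
    ext y
    rw [hQ, Finset.mul_sum, Finset.sum_mul]
    exact Finset.sum_congr rfl fun i _ => by ring
  have iQ : Integrable fun y => 1 / 2 * ⟪G (y - x), y - x⟫ * exp (-bregman f x y) := by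
    rw [hQe]
    exact integrable_finsetSum _ fun i _ => (hmom i).1.const_mul _
  have hQle : ∫ y, 1 / 2 * ⟪G (y - x), y - x⟫ * exp (-bregman f x y) ≤ (d : ℝ) / 2 * C := by
    rw [hQe, integral_finsetSum _ fun i _ => (hmom i).1.const_mul _]
    calc ∑ i, ∫ y, l i / 2 * (⟪e i, y - x⟫ ^ 2 * exp (-bregman f x y))
        ≤ ∑ i : Fin d, C / 2 := by
          refine Finset.sum_le_sum fun i _ => ?_
          rw [integral_const_mul]
          have h1 := (hmom i).2
          rw [inner_smul_right, real_inner_self_eq_norm_sq, e.orthonormal.1 i] at h1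
          refine (mul_le_mul_of_nonneg_left h1 (by have := hl i; positivity)).trans_eq ?_
          have := (hl i).ne'
          field_simp
      _ = (d : ℝ) / 2 * C := by simp; ring
  -- equality in the Gibbs variational principle
  have hgauss : ∫⁻ y, ENNReal.ofReal (exp (-(1 / 2 * ⟪G (y - x), y - x⟫))) ≤
      ENNReal.ofReal C := by
    rw [lintegral_sub_right_eq_self
      (fun z => ENNReal.ofReal (exp (-(1 / 2 * ⟪G z, z⟫)))) x]
    exact lintegral_exp_neg_half_hessian_le hf (hL x)
  have iG : Integrable fun y => exp (-(1 / 2 * ⟪G (y - x), y - x⟫)) :=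
    (lintegral_ofReal_ne_top_iff_integrable (by fun_prop)
      (ae_of_all _ fun y => (exp_pos _).le)).1 (hgauss.trans_lt ENNReal.ofReal_lt_top).ne
  have hG' : ∫ y, exp (-(1 / 2 * ⟪G (y - x), y - x⟫)) ≤ C := by
    rw [integral_eq_lintegral_of_nonneg_ae (ae_of_all _ fun y => (exp_pos _).le)
      iG.aestronglyMeasurable]
    exact ENNReal.toReal_le_of_le_ofReal hC hgauss
  let Φ : E → ℝ := fun y => exp (-(1 / 2 * ⟪G (y - x), y - x⟫)) - exp (-bregman f x y) -
    bregman f x y * exp (-bregman f x y) + 1 / 2 * ⟪G (y - x), y - x⟫ * exp (-bregman f x y)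
  have hΦexp : ∀ y, Φ y = exp (-bregman f x y) *
      (exp (bregman f x y - 1 / 2 * ⟪G (y - x), y - x⟫) -
        (bregman f x y - 1 / 2 * ⟪G (y - x), y - x⟫ + 1)) := by
    intro y
    have : exp (-(1 / 2 * ⟪G (y - x), y - x⟫)) = exp (-bregman f x y) *
        exp (bregman f x y - 1 / 2 * ⟪G (y - x), y - x⟫) := by
      rw [← exp_add]; ring_nf
    simp only [Φ, this]
    ring
  have hΦ0 : 0 ≤ Φ := fun y => by
    rw [hΦexp]
    exact mul_nonneg (exp_pos _).le (sub_nonneg.2 (add_one_le_exp _))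
  have i1 : Integrable fun y =>
      exp (-(1 / 2 * ⟪G (y - x), y - x⟫)) - exp (-bregman f x y) := iG.sub (hint1 x)
  have i2 : Integrable fun y => exp (-(1 / 2 * ⟪G (y - x), y - x⟫)) - exp (-bregman f x y) -
      bregman f x y * exp (-bregman f x y) := i1.sub iD
  have iΦ : Integrable Φ := i2.add iQ
  have hΦint : ∫ y, Φ y = 0 := by
    refine le_antisymm ?_ (integral_nonneg hΦ0)
    have : ∫ y, Φ y = (∫ y, exp (-(1 / 2 * ⟪G (y - x), y - x⟫))) - C -
        (∫ y, bregman f x y * exp (-bregman f x y)) +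
        ∫ y, 1 / 2 * ⟪G (y - x), y - x⟫ * exp (-bregman f x y) := by
      rw [integral_add i2 iQ, integral_sub i1 iD,
        integral_sub iG (hint1 x), hval1]
    linarith
  have hΦc : Continuous Φ := by
    have := hcont x
    fun_prop
  have hΦz : Φ = 0 := (Continuous.ae_eq_iff_eq volume hΦc continuous_const).1
    ((integral_eq_zero_iff_of_nonneg hΦ0 iΦ).1 hΦint)
  have hy : Φ y = 0 := congrFun hΦz y
  rw [hΦexp, mul_eq_zero, or_iff_right (exp_pos _).ne'] at hy
  by_contra hne
  have := add_one_lt_exp (sub_ne_zero.2 hne)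
  linarith

end Rigidity

section Paraboloid

variable {E : Type*} [NormedAddCommGroup E] [InnerProductSpace ℝ E] [FiniteDimensional ℝ E]

theorem bregman_quadratic {f : E → ℝ} (hf : Differentiable ℝ f) {T : E →ₗ[ℝ] E} {b : E} {c : ℝ}
    (h : ∀ x, f x = ⟪x, T x⟫ + ⟪b, x⟫ + c) (x y : E) :
    bregman f x y = ⟪y - x, T (y - x)⟫ := by
  have hline : HasDerivAt (fun s : ℝ => x + s • (y - x)) (y - x) 0 := by
    simpa using ((hasDerivAt_id (0 : ℝ)).smul_const (y - x)).const_add x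
  have h1 : HasDerivAt (fun s : ℝ => f (x + s • (y - x))) ⟪gradient f x, y - x⟫ 0 := by
    rw [inner_gradient_left]
    have h2 : HasFDerivAt f (fderiv ℝ f x) (x + (0 : ℝ) • (y - x)) := by
      simpa using (hf x).hasFDerivAt
    exact h2.comp_hasDerivAt (0 : ℝ) hline
  set l := ⟪x, T (y - x)⟫ + ⟪y - x, T x⟫ + ⟪b, y - x⟫ with hl
  have hexp : ∀ s : ℝ, f (x + s • (y - x)) = f x + s * l + s ^ 2 * ⟪y - x, T (y - x)⟫ := by
    intro s
    rw [h, h, hl]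
    simp only [map_add, map_smul, inner_add_left, inner_add_right, inner_smul_left,
      inner_smul_right, RCLike.conj_to_real]
    ring
  have h2 : HasDerivAt (fun s : ℝ => f (x + s • (y - x))) l 0 := by
    simp only [hexp]
    exact ((((hasDerivAt_id (0 : ℝ)).mul_const l).const_add (f x)).add
      (((hasDerivAt_id (0 : ℝ)).pow 2).mul_const ⟪y - x, T (y - x)⟫)).congr_deriv (by simp)
  have h3 := hexp 1
  rw [one_smul, add_sub_cancel] at h3
  rw [bregman, h1.unique h2, h3]
  ring

variable [MeasurableSpace E] [BorelSpace E]

theorem setIntegral_truncation {α : Type*} [MeasurableSpace α] {μ : Measure α} {D : α → ℝ}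
    (hD : Measurable D) (k : ℝ) :
    ∫ y in {y | D y < k}, (k - D y) ∂μ = ∫ y, max (k - D y) 0 ∂μ := by
  rw [← integral_indicator (measurableSet_lt hD measurable_const)]
  congr 1
  ext y
  by_cases hy : D y < k
  · rw [Set.indicator_of_mem (by exact hy), max_eq_left (by linarith)]
  · rw [Set.indicator_of_notMem (by exact hy), max_eq_right (by linarith)]

/-- The integral of the truncation of a positive definite quadratic form is positive. -/
theorem integral_truncation_quadratic_pos [Nontrivial E] {T : E →ₗ[ℝ] E}
    (hT : ∀ z ≠ 0, 0 < ⟪z, T z⟫) : 0 < ∫ z, max (1 - ⟪z, T z⟫) 0 := by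
  have hTc : Continuous T := T.continuous_of_finiteDimensional
  have hc : Continuous fun z => max (1 - ⟪z, T z⟫) 0 := by fun_prop
  obtain ⟨u, hu, hmin⟩ := (isCompact_sphere (0 : E) 1).exists_isMinOn
    (NormedSpace.sphere_nonempty.2 zero_le_one)
    (f := fun z => ⟪z, T z⟫) (by fun_prop)
  have hm : 0 < ⟪u, T u⟫ := hT u (ne_zero_of_mem_unit_sphere ⟨u, hu⟩)
  have hlow : ∀ z, ⟪u, T u⟫ * ‖z‖ ^ 2 ≤ ⟪z, T z⟫ := by
    intro z
    rcases eq_or_ne z 0 with rfl | hz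
    · simp
    have hz' := norm_ne_zero_iff.2 hz
    have h1 : ⟪u, T u⟫ ≤ ⟪‖z‖⁻¹ • z, T (‖z‖⁻¹ • z)⟫ :=
      hmin (by simp [norm_smul, hz'])
    rw [map_smul, inner_smul_left, inner_smul_right, RCLike.conj_to_real] at h1
    have h2 := mul_le_mul_of_nonneg_right h1 (sq_nonneg ‖z‖)
    refine h2.trans_eq ?_
    field_simp
  have hsupp : HasCompactSupport fun z => max (1 - ⟪z, T z⟫) 0 := by
    refine HasCompactSupport.intro (isCompact_closedBall (0 : E) (√(⟪u, T u⟫⁻¹))) fun z hz => ?_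
    rw [mem_closedBall_zero_iff, not_le] at hz
    rw [Real.sqrt_lt' ((Real.sqrt_nonneg _).trans_lt hz)] at hz
    refine max_eq_right (sub_nonpos.2 (le_trans ?_ (hlow z)))
    rw [inv_eq_one_div, div_lt_iff₀ hm] at hz
    linarith
  exact hc.integral_pos_of_hasCompactSupport_nonneg_nonzero hsupp (fun z => le_max_right _ _)
    (x := 0) (by simp)

theorem integral_truncation_quadratic (T : E →ₗ[ℝ] E) {k : ℝ} (hk : 0 < k) :
    ∫ z, max (k - ⟪z, T z⟫) 0 =
      (∫ z, max (1 - ⟪z, T z⟫) 0) * k ^ (((Module.finrank ℝ E : ℝ) + 2) / 2) := by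
  have hscale : ∀ z, max (k - ⟪√k • z, T (√k • z)⟫) 0 = k * max (1 - ⟪z, T z⟫) 0 := by
    intro z
    rw [map_smul, inner_smul_left, inner_smul_right, RCLike.conj_to_real, ← mul_assoc,
      Real.mul_self_sqrt hk.le, mul_max_of_nonneg _ _ hk.le, mul_zero, mul_sub, mul_one]
  have h := Measure.integral_comp_smul volume (fun z : E => max (k - ⟪z, T z⟫) 0) √k
  simp only [hscale] at h
  rw [integral_const_mul, abs_of_pos (by positivity), smul_eq_mul, eq_inv_mul_iff_mul_eq₀
    (by positivity)] at h
  rw [← h, add_div, div_self two_ne_zero, Real.rpow_add hk, Real.rpow_one, Real.sqrt_eq_rpow,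
    ← Real.rpow_natCast, ← Real.rpow_mul hk.le, one_div_mul_eq_div]
  ring

end Paraboloid

theorem sum_sum_mul_eq_inner {n : ℕ} (A : Matrix (Fin n) (Fin n) ℝ)
    (x : EuclideanSpace ℝ (Fin n)) :
    ∑ i, ∑ j, A i j * x i * x j = ⟪x, Matrix.toEuclideanLin A x⟫ := by
  simp only [PiLp.inner_apply, Matrix.toLpLin_apply, Matrix.mulVec, dotProduct,
    RCLike.inner_apply, RCLike.conj_to_real, Finset.sum_mul]
  exact Finset.sum_congr rfl fun i _ => Finset.sum_congr rfl fun j _ => by ring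

theorem inner_toEuclideanLin_pos {n : ℕ} {A : Matrix (Fin n) (Fin n) ℝ} (hA : A.PosDef)
    {x : EuclideanSpace ℝ (Fin n)} (hx : x ≠ 0) : 0 < ⟪x, Matrix.toEuclideanLin A x⟫ := by
  rw [← sum_sum_mul_eq_inner]
  have h := hA.dotProduct_mulVec_pos (x := x.ofLp) (by simpa using hx)
  refine h.trans_eq ?_
  simp only [dotProduct, Matrix.mulVec, Finset.mul_sum, Pi.star_apply, star_trivial]
  exact Finset.sum_congr rfl fun i _ => Finset.sum_congr rfl fun j _ => by ring

theorem inner_fderiv_gradient_eq_hessianMatrix {n : ℕ} {f : EuclideanSpace ℝ (Fin n) → ℝ}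
    (hf : ContDiff ℝ 2 f) (x z : EuclideanSpace ℝ (Fin n)) :
    ⟪fderiv ℝ (gradient f) x z, z⟫ = ∑ i, ∑ j, hessianMatrix f x i j * z i * z j := by
  have hz : z = ∑ i, z i • EuclideanSpace.single i (1 : ℝ) := by
    have := ((EuclideanSpace.basisFun (Fin n) ℝ).sum_repr z).symm
    simpa using this
  rw [inner_fderiv_gradient hf]
  conv_lhs => rw [hz]
  simp only [map_sum, map_smul, sum_apply, smul_apply,
    smul_eq_mul, hessianMatrix, Matrix.of_apply, iteratedFDeriv_two_apply, Matrix.cons_val_zero,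
    Matrix.cons_val_one, Finset.mul_sum]
  rw [Finset.sum_comm]
  exact Finset.sum_congr rfl fun i _ => Finset.sum_congr rfl fun j _ => by ring


theorem elliptic_paraboloid_iff_volume_power (n : ℕ) (hn : 1 ≤ n)
    (f : EuclideanSpace ℝ (Fin n) → ℝ)
    (hf : ContDiff ℝ (⊤ : ℕ∞) f) (hconv : ConvexOn ℝ Set.univ f)
    (hhess : ∀ x, (hessianMatrix f x).PosDef) :
    (∃ (A : Matrix (Fin n) (Fin n) ℝ) (b : EuclideanSpace ℝ (Fin n)) (c : ℝ),
      A.PosDef ∧ ∀ x, f x = (∑ i, ∑ j, A i j * x i * x j) + (∑ i, b i * x i) + c) ↔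
    (∃ a : ℝ, 0 < a ∧ ∀ (x : EuclideanSpace ℝ (Fin n)) (k : ℝ), 0 < k →
      (∫ y in {y | f y < f x + ⟪gradient f x, y - x⟫ + k},
        (f x + ⟪gradient f x, y - x⟫ + k - f y)) = a * k ^ (((n : ℝ) + 2) / 2)) := by
  have hf2 : ContDiff ℝ 2 f := contDiff_infty.1 hf 2
  have hdf : Differentiable ℝ f := hf2.differentiable (by norm_num)
  have hset : ∀ (x : EuclideanSpace ℝ (Fin n)) (k : ℝ),
      (∫ y in {y | f y < f x + ⟪gradient f x, y - x⟫ + k},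
        (f x + ⟪gradient f x, y - x⟫ + k - f y)) =
      ∫ y in {y | bregman f x y < k}, (k - bregman f x y) := by
    intro x k
    have h1 : {y | f y < f x + ⟪gradient f x, y - x⟫ + k} = {y | bregman f x y < k} := by
      ext y
      simp only [bregman, Set.mem_ofPred_eq]
      constructor <;> intro h <;> linarith
    rw [h1]
    congr 1
    ext y
    simp only [bregman]
    ring
  simp only [hset]
  constructor
  · rintro ⟨A, b, c, hA, hfA⟩
    have : Nonempty (Fin n) := ⟨⟨0, hn⟩⟩
    set T := Matrix.toEuclideanLin A with hT
    have hbreg : ∀ x y, bregman f x y = ⟪y - x, T (y - x)⟫ := by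
      refine bregman_quadratic hdf (b := b) (c := c) fun x => ?_
      rw [hfA, sum_sum_mul_eq_inner]
      simp [PiLp.inner_apply, mul_comm, hT]
    refine ⟨∫ z, max (1 - ⟪z, T z⟫) 0,
      integral_truncation_quadratic_pos fun z hz => inner_toEuclideanLin_pos hA hz,
      fun x k hk => ?_⟩
    rw [setIntegral_truncation (continuous_bregman hdf.continuous x).measurable]
    simp only [hbreg]
    rw [integral_sub_right_eq_self (fun z => max (k - ⟪z, T z⟫) 0) x,
      integral_truncation_quadratic T hk, finrank_euclideanSpace_fin]
  · rintro ⟨a, ha, hV⟩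
    have hpos : ∀ x, ∀ z ≠ 0, 0 < ⟪fderiv ℝ (gradient f) x z, z⟫ := by
      intro x z hz
      rw [inner_fderiv_gradient_eq_hessianMatrix hf2, sum_sum_mul_eq_inner]
      exact inner_toEuclideanLin_pos (hhess x) hz
    have hm : 0 < ((n : ℝ) + 2) / 2 := by positivity
    have hquad := bregman_eq_half_hessian hf2 hconv hpos
      (C := a * Real.Gamma (((n : ℝ) + 2) / 2 + 1))
      (mul_nonneg ha.le (Real.Gamma_pos_of_pos (by positivity)).le)
      (fun x t ht => by
        rw [lintegral_exp_neg_of_truncation (continuous_bregman hdf.continuous x).measurable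
          (bregman_nonneg hconv hdf x) ha hm (hV x) ht, finrank_euclideanSpace_fin]
        congr 3
        ring) 0
    refine ⟨(1 / 2 : ℝ) • hessianMatrix f 0, gradient f 0, f 0,
      (hhess 0).smul (by norm_num), fun x => ?_⟩
    have h1 := hquad x
    rw [sub_zero, inner_fderiv_gradient_eq_hessianMatrix hf2] at h1
    have h2 : ⟪gradient f 0, x⟫ = ∑ i, gradient f 0 i * x i := by
      simp only [PiLp.inner_apply, RCLike.inner_apply, RCLike.conj_to_real, mul_comm]
    have h3 : ∑ i, ∑ j, ((1 / 2 : ℝ) • hessianMatrix f 0) i j * x i * x j =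
        1 / 2 * ∑ i, ∑ j, hessianMatrix f 0 i j * x i * x j := by
      simp only [Finset.mul_sum, Matrix.smul_apply, smul_eq_mul, mul_assoc]
    rw [h3, ← h1, ← h2, bregman, sub_zero]
    ring
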